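/- Let G be a group and θ an involutive automorphism of G (i.e. θ ∘ θ = id). For g ∈ G set s(g) = g⁻¹ · θ(g), and let γ = s(g). Let N be a subgroup of G all of whose elements are fixed by θ. Assume that twisted conjugation by γ is injective on N, i.e. for all n, n' ∈ N, n⁻¹ γ n = n'⁻¹ γ n' implies n = n'. Then the map N × N → G sending (n₁, n₂) to g⁻¹ n₁ g n₂ is injective. -/

import Mathlib

/-!
Left multiplication by a fixed point of `θ` does not change `s`, while right multiplication by one
conjugates it. Hence `n₁ * g * n₂ = g * (g⁻¹ * n₁ * g * n₂)` is sent by `s` to `n₂⁻¹ * s g * n₂`,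
which determines `n₂`; cancellation then determines `n₁`.
-/

section TwistedSymmetrization

variable {G : Type*} [Group G]

/-- The symmetrization map `s` of `G` twisted by `θ`. It is defined for an arbitrary
endomorphism `θ`, with the case of an involutive automorphism in mind. -/
def twistedSymmetrization (θ : G →* G) (g : G) : G := g⁻¹ * θ g

variable (θ : G →* G)

theorem twistedSymmetrization_mul (x y : G) :
    twistedSymmetrization θ (x * y) = y⁻¹ * twistedSymmetrization θ x * θ y := by
  simp only [twistedSymmetrization, map_mul, mul_inv_rev, mul_assoc]

variable {θ}

theorem twistedSymmetrization_eq_one_iff {g : G} : twistedSymmetrization θ g = 1 ↔ θ g = g :=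
  inv_mul_eq_one.trans eq_comm

theorem twistedSymmetrization_mul_of_fixed_left {n : G} (hn : θ n = n) (g : G) :
    twistedSymmetrization θ (n * g) = twistedSymmetrization θ g := by
  rw [twistedSymmetrization_mul, twistedSymmetrization_eq_one_iff.mpr hn, mul_one,
    twistedSymmetrization]

theorem twistedSymmetrization_mul_of_fixed_right (g : G) {n : G} (hn : θ n = n) :
    twistedSymmetrization θ (g * n) = n⁻¹ * twistedSymmetrization θ g * n := by
  rw [twistedSymmetrization_mul, hn]

theorem twistedSymmetrization_mul_mul_of_fixed {m n : G} (hm : θ m = m) (g : G) (hn : θ n = n) :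
    twistedSymmetrization θ (m * g * n) = n⁻¹ * twistedSymmetrization θ g * n := by
  rw [twistedSymmetrization_mul_of_fixed_right _ hn, twistedSymmetrization_mul_of_fixed_left hm]

theorem injective_eta_of_twisted_conj_injective_general {g : G} {M N : Set G}
    (hM : ∀ m ∈ M, θ m = m) (hN : ∀ n ∈ N, θ n = n)
    (hconj : N.InjOn fun n ↦ n⁻¹ * twistedSymmetrization θ g * n) :
    Function.Injective (fun p : M × N ↦ g⁻¹ * (p.1 : G) * g * (p.2 : G)) := by
  rintro ⟨⟨m, hm⟩, ⟨n, hn⟩⟩ ⟨⟨m', hm'⟩, ⟨n', hn'⟩⟩ heta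
  have hprod : m * g * n = m' * g * n' := by
    simpa only [mul_assoc, mul_right_inj] using heta
  obtain rfl : n = n' := hconj hn hn' <|
    calc
      n⁻¹ * twistedSymmetrization θ g * n = twistedSymmetrization θ (m * g * n) :=
        (twistedSymmetrization_mul_mul_of_fixed (hM m hm) g (hN n hn)).symm
      _ = twistedSymmetrization θ (m' * g * n') := by rw [hprod]
      _ = n'⁻¹ * twistedSymmetrization θ g * n' :=
        twistedSymmetrization_mul_mul_of_fixed (hM m' hm') g (hN n' hn')
  obtain rfl : m = m' := mul_right_cancel (mul_right_cancel hprod)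
  rfl

end TwistedSymmetrization

/-- Let `G` be a group, `θ` an involutive automorphism of `G`, and for `g ∈ G` set
`s g = g⁻¹ * θ g` and `γ = s g`. Let `N` be a subgroup of `G` pointwise fixed by `θ`.
If twisted conjugation by `γ` is injective on `N`, then the map
`(n₁, n₂) ↦ g⁻¹ * n₁ * g * n₂` from `N × N` to `G` is injective. -/
theorem injective_eta_of_twisted_conj_injective
    {G : Type*} [Group G] (θ : G ≃* G) (hθ : ∀ g : G, θ (θ g) = g)
    (s : G → G) (hs : ∀ g : G, s g = g⁻¹ * θ g)
    (g : G) (γ : G) (hγ : γ = s g)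
    (N : Subgroup G) (hNfix : ∀ n ∈ N, θ n = n)
    (htc : ∀ n ∈ N, ∀ n' ∈ N, n⁻¹ * γ * n = n'⁻¹ * γ * n' → n = n') :
    Function.Injective (fun p : N × N => g⁻¹ * (p.1 : G) * g * (p.2 : G)) := by
  obtain rfl : γ = twistedSymmetrization θ.toMonoidHom g := hγ.trans (hs g)
  exact injective_eta_of_twisted_conj_injective_general hNfix hNfix
    fun n hn n' hn' ↦ htc n hn n' hn'
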